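/- Let N ≤ P and M ≤ N be positive integers, let C > 0 be a real constant, and let A ∈ ℂ^{N×P} satisfy A·Aᴴ = C·I_N. Let T ∈ ℂ^{P×P} be Hermitian positive semidefinite and set S = A·T·Aᴴ ∈ ℂ^{N×N}. Then a matrix Φ ∈ ℂ^{M×N} minimizes J(Φ) = ‖Aᴴ·Φᴴ·Φ·A − T‖_F² over all matrices in ℂ^{M×N} if and only if Φᴴ·Φ = C^{-2}·S_M for some rank-M truncation S_M of S, i.e., S_M = U·D_M·Uᴴ where S = U·D·Uᴴ is a unitary diagonalization of S with the (real, nonnegative) eigenvalues on the diagonal of D arranged in nonincreasing order and D_M is obtained from D by setting all but its M largest diagonal entries to zero. -/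

import Mathlib

open Matrix ComplexOrder

/-- Squared Frobenius norm of a complex matrix. -/
noncomputable def frobSq {m n : Type*} [Fintype m] [Fintype n] (X : Matrix m n ℂ) : ℝ :=
  ∑ i, ∑ j, ‖X i j‖ ^ 2

/-!
Since `A * Aᴴ = C • 1`, expanding the square gives `J(Φ) = C² ‖Φᴴ Φ - C⁻² S‖² + const`, and the
matrices `Φᴴ Φ` are exactly the positive semidefinite matrices of rank at most `M`. So the question
is which such `X` are closest to the positive semidefinite matrix `B = C⁻² S`.

Write `X = V diag(x) Vᴴ`, `B = U diag(d) Uᴴ` with `d` nonincreasing, and `W = Vᴴ U`. Then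
`‖X - B‖² = ∑ i, ∑ j, (x i - d j)² |W i j|²` with doubly stochastic weights `|W i j|²`. At most `M`
of the `x i` are nonzero, so the rows with `x i = 0` alone contribute at least the sum of `(d j)²`
over the indices `j ≥ M`, which is the error of a truncation. Equality forces
`(x i - d j) W i j = 0` whenever `x i ≠ 0`, that is, `X² = X B`. Then `(2 X - B)² = B²`, so `B` is
the absolute value of `2 X - B`, and a diagonalization of `2 X - B` diagonalizes both `X` and `B`.
It remains to approximate the vector of eigenvalues by a vector with at most `M` nonzero entries:
the optimal ones keep `M` entries, and exchanging a single index shows that these are the largest.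
-/

section Frobenius

variable {k l m n : Type*} [Fintype k] [Fintype l] [Fintype m] [Fintype n]

lemma frobSq_eq_trace (X : Matrix m n ℂ) : (frobSq X : ℂ) = trace (Xᴴ * X) := by
  simp only [frobSq, trace, diag, mul_apply, conjTranspose_apply, Complex.star_def,
    Complex.conj_mul']
  rw [Finset.sum_comm]
  push_cast
  rfl

lemma frobSq_sub (X Y : Matrix m n ℂ) :
    frobSq (X - Y) = frobSq X - 2 * (trace (Yᴴ * X)).re + frobSq Y := by
  have cross : trace (Xᴴ * Y) = star (trace (Yᴴ * X)) := by
    rw [← trace_conjTranspose, conjTranspose_mul, conjTranspose_conjTranspose]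
  have expand : (frobSq (X - Y) : ℂ) =
      frobSq X - (trace (Yᴴ * X) + star (trace (Yᴴ * X))) + frobSq Y := by
    simp only [frobSq_eq_trace, ← cross, conjTranspose_sub, Matrix.sub_mul, Matrix.mul_sub,
      trace_sub]
    ring
  rw [Complex.star_def, Complex.add_conj] at expand
  exact_mod_cast expand

lemma frobSq_smul (c : ℂ) (X : Matrix m n ℂ) : frobSq (c • X) = ‖c‖ ^ 2 * frobSq X := by
  simp only [frobSq, Finset.mul_sum, Matrix.smul_apply, smul_eq_mul, norm_mul, mul_pow]

lemma frobSq_conjTranspose_mul_mul [DecidableEq k] [DecidableEq l] {A : Matrix k m ℂ}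
    {B : Matrix l n ℂ} {a b : ℝ} (hA : A * Aᴴ = (a : ℂ) • 1) (hB : B * Bᴴ = (b : ℂ) • 1)
    (Q : Matrix k l ℂ) : frobSq (Aᴴ * Q * B) = a * b * frobSq Q := by
  have : (frobSq (Aᴴ * Q * B) : ℂ) = a * b * frobSq Q := by
    calc (frobSq (Aᴴ * Q * B) : ℂ)
        = trace (Bᴴ * (Qᴴ * (A * Aᴴ) * Q) * B) := by
          simp only [frobSq_eq_trace, conjTranspose_mul, conjTranspose_conjTranspose,
            Matrix.mul_assoc]
      _ = trace (B * Bᴴ * (Qᴴ * (A * Aᴴ) * Q)) := by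
          rw [trace_mul_comm, ← Matrix.mul_assoc]
      _ = a * b * frobSq Q := by
          simp only [hA, hB, frobSq_eq_trace, Matrix.mul_smul, Matrix.smul_mul, Matrix.mul_one,
            Matrix.one_mul, trace_smul, smul_eq_mul]
          ring
  exact_mod_cast this

lemma frobSq_conjTranspose_mul_mul_sub [DecidableEq k] {A : Matrix k m ℂ} {C : ℝ} (hC : C ≠ 0)
    (hA : A * Aᴴ = (C : ℂ) • 1) (Q : Matrix k k ℂ) (T : Matrix m m ℂ) :
    frobSq (Aᴴ * Q * A - T) =
      C ^ 2 * frobSq (Q - ((C : ℂ) ^ 2)⁻¹ • (A * T * Aᴴ)) +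
        (frobSq T - (C ^ 2)⁻¹ * frobSq (A * T * Aᴴ)) := by
  have cross : trace (Tᴴ * (Aᴴ * Q * A)) = trace ((A * T * Aᴴ)ᴴ * Q) := by
    rw [← Matrix.mul_assoc, trace_mul_comm]
    simp only [conjTranspose_mul, conjTranspose_conjTranspose, Matrix.mul_assoc]
  have re_trace : (trace ((((C : ℂ) ^ 2)⁻¹ • (A * T * Aᴴ))ᴴ * Q)).re =
      (C ^ 2)⁻¹ * (trace ((A * T * Aᴴ)ᴴ * Q)).re := by
    rw [conjTranspose_smul, Matrix.smul_mul, trace_smul, ← Complex.ofReal_pow,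
      ← Complex.ofReal_inv, Complex.star_def, Complex.conj_ofReal, smul_eq_mul,
      Complex.re_ofReal_mul]
  rw [frobSq_sub, frobSq_conjTranspose_mul_mul hA hA, cross, frobSq_sub, frobSq_smul, re_trace]
  simp only [norm_inv, norm_pow, Complex.norm_real, Real.norm_eq_abs, sq_abs]
  field_simp
  ring

lemma frobSq_conjTranspose_mul_mul_sub_le_iff [DecidableEq k] {A : Matrix k m ℂ} {C : ℝ}
    (hC : C ≠ 0) (hA : A * Aᴴ = (C : ℂ) • 1) (Q R : Matrix k k ℂ) (T : Matrix m m ℂ) :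
    frobSq (Aᴴ * Q * A - T) ≤ frobSq (Aᴴ * R * A - T) ↔
      frobSq (Q - ((C : ℂ) ^ 2)⁻¹ • (A * T * Aᴴ)) ≤
        frobSq (R - ((C : ℂ) ^ 2)⁻¹ • (A * T * Aᴴ)) := by
  rw [frobSq_conjTranspose_mul_mul_sub hC hA, frobSq_conjTranspose_mul_mul_sub hC hA,
    add_le_add_iff_right, mul_le_mul_iff_right₀ (by positivity)]

end Frobenius

section Diagonalization

variable {n : Type*} [Fintype n] [DecidableEq n]

/-- The Hermitian matrix `U D Uᴴ`, where `D` is the diagonal matrix with real entries `d`. When `U`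
is unitary, its columns are eigenvectors for the eigenvalues `d`. -/
noncomputable def unitaryDiag (U : Matrix n n ℂ) (d : n → ℝ) : Matrix n n ℂ :=
  U * diagonal (fun i => (d i : ℂ)) * Uᴴ

lemma smul_unitaryDiag (c : ℝ) (U : Matrix n n ℂ) (d : n → ℝ) :
    (c : ℂ) • unitaryDiag U d = unitaryDiag U (c • d) := by
  rw [unitaryDiag, unitaryDiag, ← Matrix.smul_mul, ← Matrix.mul_smul, ← diagonal_smul]
  congr 3
  ext i
  simp

lemma unitaryDiag_add (U : Matrix n n ℂ) (d e : n → ℝ) :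
    unitaryDiag U (d + e) = unitaryDiag U d + unitaryDiag U e := by
  rw [unitaryDiag, unitaryDiag, unitaryDiag, ← Matrix.add_mul, ← Matrix.mul_add, diagonal_add]
  congr 3
  ext i
  simp

lemma conjTranspose_mul_unitaryDiag {U : Matrix n n ℂ} (hU : U ∈ unitaryGroup n ℂ) (d : n → ℝ) :
    Uᴴ * unitaryDiag U d = diagonal (fun i => (d i : ℂ)) * Uᴴ := by
  rw [unitaryDiag, ← Matrix.mul_assoc, ← Matrix.mul_assoc, ← star_eq_conjTranspose,
    mem_unitaryGroup_iff'.mp hU, Matrix.one_mul]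

lemma unitaryDiag_mul {U : Matrix n n ℂ} (hU : U ∈ unitaryGroup n ℂ) (d : n → ℝ) :
    unitaryDiag U d * U = U * diagonal (fun i => (d i : ℂ)) := by
  rw [unitaryDiag, Matrix.mul_assoc, ← star_eq_conjTranspose, mem_unitaryGroup_iff'.mp hU,
    Matrix.mul_one]

lemma unitaryDiag_mul_unitaryDiag {U : Matrix n n ℂ} (hU : U ∈ unitaryGroup n ℂ) (d e : n → ℝ) :
    unitaryDiag U d * unitaryDiag U e = unitaryDiag U (d * e) := by
  rw [unitaryDiag, Matrix.mul_assoc, conjTranspose_mul_unitaryDiag hU, ← Matrix.mul_assoc,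
    Matrix.mul_assoc U, diagonal_mul_diagonal, unitaryDiag]
  congr 3
  ext i
  simp

lemma unitaryDiag_mul_self_eq_mul {U V : Matrix n n ℂ} (hV : V ∈ unitaryGroup n ℂ)
    (hU : U ∈ unitaryGroup n ℂ) {x d : n → ℝ}
    (h : ∀ i j, x i ≠ 0 → x i ≠ d j → (Vᴴ * U) i j = 0) :
    unitaryDiag V x * unitaryDiag V x = unitaryDiag V x * unitaryDiag U d := by
  have entry_eq (i j) : (x i : ℂ) * (x i * (Vᴴ * U) i j) = x i * ((Vᴴ * U) i j * d j) := by
    by_cases hi : x i = 0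
    · rw [hi, Complex.ofReal_zero, zero_mul, zero_mul]
    by_cases hij : x i = d j
    · rw [hij, mul_comm (d j : ℂ) ((Vᴴ * U) i j)]
    · rw [h i j hi hij, mul_zero, zero_mul]
  have conj_eq : Vᴴ * (unitaryDiag V x * unitaryDiag V x) * U =
      Vᴴ * (unitaryDiag V x * unitaryDiag U d) * U := by
    rw [← Matrix.mul_assoc, ← Matrix.mul_assoc, conjTranspose_mul_unitaryDiag hV,
      Matrix.mul_assoc (diagonal _) Vᴴ, conjTranspose_mul_unitaryDiag hV]
    simp only [Matrix.mul_assoc, unitaryDiag_mul hU]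
    ext i j
    simpa only [diagonal_mul, ← Matrix.mul_assoc Vᴴ, mul_diagonal] using entry_eq i j
  have U_unit : IsUnit U := Unitary.isUnit_coe (U := ⟨U, hU⟩)
  have V_unit : IsUnit Vᴴ := Unitary.isUnit_coe (U := ⟨Vᴴ, Unitary.star_mem hV⟩)
  exact V_unit.mul_left_cancel (U_unit.mul_right_cancel conj_eq)

lemma posSemidef_unitaryDiag (U : Matrix n n ℂ) {d : n → ℝ} (hd : 0 ≤ d) :
    (unitaryDiag U d).PosSemidef :=
  (posSemidef_diagonal_iff.mpr fun i => by exact_mod_cast hd i).mul_mul_conjTranspose_same U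

lemma exists_unitaryDiag {A : Matrix n n ℂ} (hA : A.IsHermitian) :
    ∃ U ∈ unitaryGroup n ℂ, ∃ d : n → ℝ, A = unitaryDiag U d :=
  ⟨hA.eigenvectorUnitary, hA.eigenvectorUnitary.2, hA.eigenvalues, hA.spectral_theorem⟩

lemma rank_unitaryDiag {U : Matrix n n ℂ} (hU : U ∈ unitaryGroup n ℂ) (d : n → ℝ) :
    (unitaryDiag U d).rank = (Finset.univ.filter (d · ≠ 0)).card := by
  have det_U : IsUnit U.det := UnitaryGroup.det_isUnit ⟨U, hU⟩
  rw [unitaryDiag, rank_mul_eq_left_of_isUnit_det _ _ (by simpa [det_conjTranspose] using det_U),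
    rank_mul_eq_right_of_isUnit_det _ _ det_U, rank_diagonal, Fintype.card_subtype]
  simp

lemma nonneg_of_posSemidef_unitaryDiag {U : Matrix n n ℂ} (hU : U ∈ unitaryGroup n ℂ) {d : n → ℝ}
    (h : (unitaryDiag U d).PosSemidef) : 0 ≤ d := by
  have hdiag : (diagonal fun i => (d i : ℂ)).PosSemidef := by
    have := h.conjTranspose_mul_mul_same U
    rwa [conjTranspose_mul_unitaryDiag hU, Matrix.mul_assoc, ← star_eq_conjTranspose,
      mem_unitaryGroup_iff'.mp hU, Matrix.mul_one] at this
  exact fun i => by exact_mod_cast posSemidef_diagonal_iff.mp hdiag i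

lemma submatrix_equiv_mem_unitaryGroup {U : Matrix n n ℂ} (hU : U ∈ unitaryGroup n ℂ)
    (σ : Equiv.Perm n) : U.submatrix id σ ∈ unitaryGroup n ℂ := by
  rw [mem_unitaryGroup_iff, star_eq_conjTranspose, conjTranspose_submatrix, submatrix_mul_equiv,
    ← star_eq_conjTranspose, mem_unitaryGroup_iff.mp hU, submatrix_id_id]

lemma unitaryDiag_submatrix_equiv (U : Matrix n n ℂ) (d : n → ℝ) (σ : Equiv.Perm n) :
    unitaryDiag (U.submatrix id σ) (d ∘ σ) = unitaryDiag U d := by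
  have hdiag : (diagonal fun i => ((d ∘ σ) i : ℂ)) =
      (diagonal fun i => (d i : ℂ)).submatrix σ σ :=
    (submatrix_diagonal_equiv (fun i => (d i : ℂ)) σ).symm
  rw [unitaryDiag, hdiag, conjTranspose_submatrix, submatrix_mul_equiv, submatrix_mul_equiv,
    submatrix_id_id, unitaryDiag]

open scoped MatrixOrder in
lemma exists_unitaryDiag_of_mul_self_eq_mul {X B : Matrix n n ℂ} (hX : X.IsHermitian)
    (hB : B.PosSemidef) (h : X * X = X * B) :
    ∃ U ∈ unitaryGroup n ℂ, ∃ x b : n → ℝ, X = unitaryDiag U x ∧ B = unitaryDiag U b := by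
  have h' : X * X = B * X := by
    simpa only [conjTranspose_mul, hX.eq, hB.1.eq] using congrArg conjTranspose h
  -- `(2 X - B) ^ 2 = B ^ 2` makes `B` the absolute value of `2 X - B`.
  obtain ⟨U, hU, z, hz⟩ := exists_unitaryDiag ((hX.add hX).sub hB.1)
  have hB_abs : B = unitaryDiag U |z| := by
    refine (CFC.sq_eq_sq_iff B _ hB.nonneg
      (posSemidef_unitaryDiag U (abs_nonneg z)).nonneg).mp ?_
    have sq_eq : unitaryDiag U |z| ^ 2 = unitaryDiag U z ^ 2 := by
      rw [sq, sq, unitaryDiag_mul_unitaryDiag hU, unitaryDiag_mul_unitaryDiag hU]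
      congr 1
      exact funext fun i => abs_mul_abs_self (z i)
    rw [sq_eq, ← hz, sq, sq]
    symm
    calc (X + X - B) * (X + X - B)
        = 4 • (X * X) - 2 • (X * B) - 2 • (B * X) + B * B := by noncomm_ring
      _ = B * B := by rw [← h, ← h']; module
  refine ⟨U, hU, (2 : ℝ)⁻¹ • (z + |z|), |z|, ?_, hB_abs⟩
  rw [← smul_unitaryDiag, unitaryDiag_add, ← hz, ← hB_abs]
  push_cast
  module

end Diagonalization

section Approximation

variable {n : Type*} [Fintype n] [DecidableEq n]

lemma norm_sq_mem_doublyStochastic {W : Matrix n n ℂ} (hW : W ∈ unitaryGroup n ℂ) :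
    (of fun i j => ‖W i j‖ ^ 2) ∈ doublyStochastic ℝ n := by
  have row_sum {V : Matrix n n ℂ} (hV : V ∈ unitaryGroup n ℂ) (i : n) :
      ∑ j, ‖V i j‖ ^ 2 = 1 := by
    have := congrFun₂ (mem_unitaryGroup_iff.mp hV) i i
    simp only [mul_apply, star_apply, one_apply_eq, Complex.star_def, Complex.mul_conj'] at this
    exact_mod_cast this
  refine mem_doublyStochastic_iff_sum.mpr ⟨fun _ _ => sq_nonneg _, row_sum hW, fun j => ?_⟩
  simpa only [of_apply, star_apply, norm_star] using row_sum (Unitary.star_mem hW) j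

lemma frobSq_unitaryDiag_sub_unitaryDiag {U V : Matrix n n ℂ} (hU : U ∈ unitaryGroup n ℂ)
    (hV : V ∈ unitaryGroup n ℂ) (x d : n → ℝ) :
    frobSq (unitaryDiag V x - unitaryDiag U d) =
      ∑ i, ∑ j, (x i - d j) ^ 2 * ‖(Vᴴ * U) i j‖ ^ 2 := by
  have conj_eq : Vᴴ * (unitaryDiag V x - unitaryDiag U d) * U =
      diagonal (fun i => (x i : ℂ)) * (Vᴴ * U) - Vᴴ * U * diagonal (fun i => (d i : ℂ)) := by
    rw [Matrix.mul_sub, Matrix.sub_mul, conjTranspose_mul_unitaryDiag hV, Matrix.mul_assoc,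
      Matrix.mul_assoc Vᴴ, unitaryDiag_mul hU, Matrix.mul_assoc]
  have mul_star {W : Matrix n n ℂ} (hW : W ∈ unitaryGroup n ℂ) :
      W * Wᴴ = ((1 : ℝ) : ℂ) • 1 := by
    rw [Complex.ofReal_one, one_smul, ← star_eq_conjTranspose, mem_unitaryGroup_iff.mp hW]
  have invariance := frobSq_conjTranspose_mul_mul (mul_star hV) (mul_star hU)
    (unitaryDiag V x - unitaryDiag U d)
  rw [one_mul, one_mul, conj_eq] at invariance
  rw [← invariance, frobSq]
  refine Finset.sum_congr rfl fun i _ => Finset.sum_congr rfl fun j _ => ?_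
  rw [Matrix.sub_apply, diagonal_mul, mul_diagonal, mul_comm _ (d j : ℂ), ← sub_mul,
    ← Complex.ofReal_sub, norm_mul, mul_pow, Complex.norm_real, Real.norm_eq_abs, sq_abs]

lemma frobSq_unitaryDiag_sub_same {U : Matrix n n ℂ} (hU : U ∈ unitaryGroup n ℂ) (x d : n → ℝ) :
    frobSq (unitaryDiag U x - unitaryDiag U d) = ∑ i, (x i - d i) ^ 2 := by
  rw [frobSq_unitaryDiag_sub_unitaryDiag hU hU, ← star_eq_conjTranspose,
    mem_unitaryGroup_iff'.mp hU]
  refine Finset.sum_congr rfl fun i _ => ?_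
  rw [Finset.sum_eq_single i (fun j _ hj => by simp [one_apply_ne hj.symm]) (by simp)]
  simp

variable {N M : ℕ}

lemma sum_tail_le_sum_mul {c q : Fin N → ℝ} (hc : Antitone c) (hc0 : 0 ≤ c) (hq0 : 0 ≤ q)
    (hq1 : q ≤ 1) (hq : (N : ℝ) ≤ M + ∑ j, q j) :
    ∑ j with M ≤ Fin.val j, c j ≤ ∑ j, q j * c j := by
  obtain hNM | hMN := le_or_gt N M
  · rw [Finset.filter_eq_empty_iff.mpr fun j _ => not_le.mpr (j.2.trans_le hNM), Finset.sum_empty]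
    exact Finset.sum_nonneg fun j _ => mul_nonneg (hq0 j) (hc0 j)
  have card_tail : ∑ j : Fin N, (if M ≤ (j : ℕ) then (1 : ℝ) else 0) = N - M := by
    have : (Finset.univ.filter fun j : Fin N => M ≤ (j : ℕ)) = Finset.Ici ⟨M, hMN⟩ :=
      Finset.filter_le_eq_Ici (a := (⟨M, hMN⟩ : Fin N))
    rw [Finset.sum_boole, this, Fin.card_Ici, Nat.cast_sub hMN.le]
  obtain ⟨t, ht⟩ : ∃ t, t = c ⟨M, hMN⟩ := ⟨_, rfl⟩
  have pointwise (j : Fin N) :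
      (if M ≤ (j : ℕ) then c j else 0) ≤
        q j * c j + t * ((if M ≤ (j : ℕ) then 1 else 0) - q j) := by
    split_ifs with hj
    · have hct : c j ≤ t := ht ▸ hc (Fin.mk_le_of_le_val hj)
      have : q j ≤ 1 := hq1 j
      nlinarith
    · have htc : t ≤ c j := ht ▸ hc (Fin.mk_le_of_le_val (not_le.mp hj).le)
      have : 0 ≤ q j := hq0 j
      nlinarith
  calc ∑ j with M ≤ Fin.val j, c j
      ≤ ∑ j : Fin N, (q j * c j + t * ((if M ≤ (j : ℕ) then 1 else 0) - q j)) := by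
        rw [Finset.sum_filter]
        exact Finset.sum_le_sum fun j _ => pointwise j
    _ = ∑ j, q j * c j + t * (N - M - ∑ j, q j) := by
        rw [Finset.sum_add_distrib, ← Finset.mul_sum, Finset.sum_sub_distrib, card_tail]
    _ ≤ ∑ j, q j * c j :=
        add_le_of_nonpos_right (mul_nonpos_of_nonneg_of_nonpos (ht ▸ hc0 _) (by linarith))

lemma sum_tail_add_sum_support_le {w : Matrix (Fin N) (Fin N) ℝ}
    (hw : w ∈ doublyStochastic ℝ (Fin N)) {x d : Fin N → ℝ}
    (hx : (Finset.univ.filter (x · ≠ 0)).card ≤ M) (hd0 : 0 ≤ d) (hd : Antitone d) :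
    ∑ j with M ≤ Fin.val j, d j ^ 2 +
        ∑ i with x i ≠ 0, ∑ j, (x i - d j) ^ 2 * w i j ≤
      ∑ i, ∑ j, (x i - d j) ^ 2 * w i j := by
  obtain ⟨w_nonneg, row_sum, col_sum⟩ := mem_doublyStochastic_iff_sum.mp hw
  let q (j : Fin N) := ∑ i with ¬x i ≠ 0, w i j
  have hq1 (j : Fin N) : q j ≤ 1 := (col_sum j).symm ▸
    Finset.sum_le_sum_of_subset_of_nonneg (Finset.filter_subset _ _) fun i _ _ => w_nonneg i j
  have sum_q : ∑ j, q j = (Finset.univ.filter fun i => ¬x i ≠ 0).card := by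
    rw [Finset.sum_comm, Finset.sum_congr rfl fun i _ => row_sum i]
    simp
  have hq : (N : ℝ) ≤ M + ∑ j, q j := by
    rw [sum_q]
    have := Finset.card_filter_add_card_filter_not (s := Finset.univ) (x · ≠ 0)
    rw [Finset.card_fin] at this
    exact_mod_cast (by omega : N ≤ M + (Finset.univ.filter fun i => ¬x i ≠ 0).card)
  have zero_rows : ∑ i with ¬x i ≠ 0, ∑ j, (x i - d j) ^ 2 * w i j = ∑ j, q j * d j ^ 2 := by
    rw [Finset.sum_comm]
    refine Finset.sum_congr rfl fun j _ => ?_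
    rw [Finset.sum_mul]
    refine Finset.sum_congr rfl fun i hi => ?_
    rw [not_not.mp (Finset.mem_filter.mp hi).2]
    ring
  rw [← Finset.sum_filter_add_sum_filter_not Finset.univ (x · ≠ 0) fun i => ∑ j, _, zero_rows,
    add_comm]
  gcongr
  exact sum_tail_le_sum_mul (fun i j hij => pow_le_pow_left₀ (hd0 j) (hd hij) 2)
    (fun j => sq_nonneg (d j)) (fun j => Finset.sum_nonneg fun i _ => w_nonneg i j) hq1 hq

end Approximation

section SparseApproximation

lemma exists_perm_antitone_and_mem_iff {N : ℕ} {α : Type*} [LinearOrder α] {f : Fin N → α}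
    {I : Finset (Fin N)} (h : ∀ i ∈ I, ∀ j ∉ I, f j ≤ f i) :
    ∃ σ : Equiv.Perm (Fin N), Antitone (f ∘ σ) ∧ ∀ k, σ k ∈ I ↔ (k : ℕ) < I.card := by
  -- Sort lexicographically, membership in `I` first.
  let key (i : Fin N) : Bool ×ₗ α := toLex (decide (i ∈ I), f i)
  let σ := Tuple.sort (OrderDual.toDual ∘ key)
  have key_le {i j : Fin N} (hij : i ≤ j) : key (σ j) ≤ key (σ i) :=
    OrderDual.toDual_le_toDual.mp (Tuple.monotone_sort (OrderDual.toDual ∘ key) hij)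
  have mem_of_le {i j : Fin N} (hij : i ≤ j) (hj : σ j ∈ I) : σ i ∈ I := by
    have : decide (σ j ∈ I) ≤ decide (σ i ∈ I) := Prod.Lex.monotone_fst _ _ (key_le hij)
    exact decide_eq_true_iff.mp (Bool.eq_true_of_true_le (decide_eq_true hj ▸ this))
  refine ⟨σ, fun i j hij => ?_, fun k => ?_⟩
  · rcases Prod.Lex.le_iff.mp (key_le hij) with hlt | ⟨-, hle⟩
    · obtain ⟨hj, hi⟩ : σ j ∉ I ∧ σ i ∈ I := by simpa [key, Bool.lt_iff] using hlt
      exact h _ hi _ hj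
    · exact hle
  · have card_eq : (Finset.univ.filter fun k => σ k ∈ I).card = I.card :=
      Finset.card_bij (fun k _ => σ k) (by simp) (by simp)
        fun i hi => ⟨σ.symm i, by simpa using hi, by simp⟩
    rw [← card_eq, Fin.lt_card_filter_univ_iff_apply_of_imp (σ · ∈ I) fun _ _ hij => mem_of_le hij]

section

variable {ι : Type*} [Fintype ι] {s x : ι → ℝ}

lemma eq_indicator_of_sum_sq_sub_le [DecidableEq ι] {I : Finset ι} (hx : ∀ i ∉ I, x i = 0)
    (h : ∑ i, (x i - s i) ^ 2 ≤ ∑ i ∈ Iᶜ, s i ^ 2) : x = (I : Set ι).indicator s := by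
  have sum_compl : ∑ i ∈ Iᶜ, (x i - s i) ^ 2 = ∑ i ∈ Iᶜ, s i ^ 2 :=
    Finset.sum_congr rfl fun i hi => by simp [hx i (Finset.mem_compl.mp hi)]
  have sum_I : ∑ i ∈ I, (x i - s i) ^ 2 = 0 := by
    refine le_antisymm ?_ (Finset.sum_nonneg fun _ _ => sq_nonneg _)
    rw [← Finset.sum_add_sum_compl I] at h
    linarith
  rw [Finset.sum_eq_zero_iff_of_nonneg fun _ _ => sq_nonneg _] at sum_I
  ext i
  by_cases hi : i ∈ I
  · rw [Set.indicator_of_mem (Finset.mem_coe.mpr hi)]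
    exact sub_eq_zero.mp (pow_eq_zero_iff two_ne_zero |>.mp (sum_I i hi))
  · rw [Set.indicator_of_notMem (mt Finset.mem_coe.mp hi), hx i hi]

lemma sum_sq_indicator_sub [DecidableEq ι] (I : Finset ι) (s : ι → ℝ) :
    ∑ i, ((I : Set ι).indicator s i - s i) ^ 2 = ∑ i ∈ Iᶜ, s i ^ 2 := by
  rw [← Finset.sum_add_sum_compl I, Finset.sum_eq_zero fun i hi => by simp [hi], zero_add]
  exact Finset.sum_congr rfl fun i hi => by simp [Finset.mem_compl.mp hi]

lemma le_of_sum_compl_le_sum_compl_swap [DecidableEq ι] {f : ι → ℝ} {I : Finset ι} {i j : ι}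
    (hi : i ∈ I) (hj : j ∉ I) (h : ∑ k ∈ Iᶜ, f k ≤ ∑ k ∈ (insert j (I.erase i))ᶜ, f k) :
    f j ≤ f i := by
  have sum_swap := Finset.sum_insert (f := f)
    fun hji : j ∈ I.erase i => hj (Finset.mem_of_mem_erase hji)
  have sum_erase := Finset.add_sum_erase I f hi
  have total_I := Finset.sum_add_sum_compl I f
  have total_swap := Finset.sum_add_sum_compl (insert j (I.erase i)) f
  linarith

lemma exists_eq_indicator_of_forall_sum_sq_sub_le {M : ℕ} (hs : 0 ≤ s)
    (hx : (Finset.univ.filter (x · ≠ 0)).card ≤ M)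
    (h : ∀ y : ι → ℝ, 0 ≤ y → (Finset.univ.filter (y · ≠ 0)).card ≤ M →
      ∑ i, (x i - s i) ^ 2 ≤ ∑ i, (y i - s i) ^ 2) :
    ∃ I : Finset ι, I.card = min M (Fintype.card ι) ∧ x = (I : Set ι).indicator s ∧
      ∀ i ∈ I, ∀ j ∉ I, s j ≤ s i := by
  classical
  have le_tail (I : Finset ι) (hI : I.card ≤ M) :
      ∑ i, (x i - s i) ^ 2 ≤ ∑ i ∈ Iᶜ, s i ^ 2 := by
    rw [← sum_sq_indicator_sub]
    refine h _ (Set.indicator_nonneg fun i _ => hs i)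
      ((Finset.card_le_card fun i hi => ?_).trans hI)
    exact Set.mem_of_indicator_ne_zero (Finset.mem_filter.mp hi).2
  obtain ⟨I, supp_I, -, card_I⟩ := Finset.exists_subsuperset_card_eq (Finset.subset_univ _)
    (le_min hx (Finset.card_le_univ _)) (min_le_right M (Fintype.card ι))
  have card_I_le : I.card ≤ M := card_I ▸ min_le_left _ _
  have x_eq : x = (I : Set ι).indicator s := by
    refine eq_indicator_of_sum_sq_sub_le (fun i hi => ?_) (le_tail I card_I_le)
    by_contra hxi
    exact hi (supp_I (Finset.mem_filter.mpr ⟨Finset.mem_univ i, hxi⟩))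
  refine ⟨I, card_I, x_eq, fun i hi j hj => ?_⟩
  have card_swap : (insert j (I.erase i)).card ≤ M := by
    rwa [Finset.card_insert_of_notMem fun hji => hj (Finset.mem_of_mem_erase hji),
      Finset.card_erase_add_one hi]
  have swap_le := le_tail _ card_swap
  rw [x_eq, sum_sq_indicator_sub] at swap_le
  exact le_of_sq_le_sq (le_of_sum_compl_le_sum_compl_swap hi hj swap_le) (hs i)

end

variable {N : ℕ}

/-- The vector `d` with all entries after the first `M` replaced by zero. For the eigenvalue vector
of a matrix this passes from the diagonal of `D` to that of `D_M`. -/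
def truncate (M : ℕ) (d : Fin N → ℝ) (i : Fin N) : ℝ :=
  if (i : ℕ) < M then d i else 0

lemma truncate_nonneg (M : ℕ) {d : Fin N → ℝ} (hd : 0 ≤ d) : 0 ≤ truncate M d := by
  intro i
  unfold truncate
  split_ifs
  exacts [hd i, le_rfl]

lemma smul_truncate (c : ℝ) (M : ℕ) (d : Fin N → ℝ) : c • truncate M d = truncate M (c • d) := by
  ext i
  simp [truncate]

lemma card_truncate_ne_zero_le (M : ℕ) (d : Fin N → ℝ) :
    (Finset.univ.filter (truncate M d · ≠ 0)).card ≤ M := by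
  rw [← Finset.card_range M]
  refine Finset.card_le_card_of_injOn Fin.val (fun i hi => ?_) Fin.val_injective.injOn
  by_contra hiM
  exact (Finset.mem_filter.mp hi).2 (if_neg (by simpa using hiM))

lemma sum_sq_truncate_sub (M : ℕ) (d : Fin N → ℝ) :
    ∑ j, (truncate M d j - d j) ^ 2 = ∑ j with M ≤ Fin.val j, d j ^ 2 := by
  rw [Finset.sum_filter]
  refine Finset.sum_congr rfl fun j _ => ?_
  by_cases hj : (j : ℕ) < M <;> simp [truncate, hj, not_le, not_lt.mp]

lemma exists_perm_eq_truncate_of_forall_sum_sq_sub_le {M : ℕ} {s x : Fin N → ℝ} (hs : 0 ≤ s)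
    (hx : (Finset.univ.filter (x · ≠ 0)).card ≤ M)
    (h : ∀ y : Fin N → ℝ, 0 ≤ y → (Finset.univ.filter (y · ≠ 0)).card ≤ M →
      ∑ i, (x i - s i) ^ 2 ≤ ∑ i, (y i - s i) ^ 2) :
    ∃ σ : Equiv.Perm (Fin N), Antitone (s ∘ σ) ∧ x ∘ σ = truncate M (s ∘ σ) := by
  obtain ⟨I, card_I, x_eq, hI⟩ := exists_eq_indicator_of_forall_sum_sq_sub_le hs hx h
  obtain ⟨σ, hσ, mem_iff⟩ := exists_perm_antitone_and_mem_iff hI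
  refine ⟨σ, hσ, funext fun k => ?_⟩
  simp [x_eq, truncate, Set.indicator_apply, mem_iff, card_I]

end SparseApproximation

section RankTruncation

lemma exists_conjTranspose_mul_self_eq_iff {κ n : Type*} [Fintype κ] [Fintype n]
    {B : Matrix n n ℂ} :
    (∃ Ψ : Matrix κ n ℂ, Ψᴴ * Ψ = B) ↔ B.PosSemidef ∧ B.rank ≤ Fintype.card κ := by
  classical
  refine ⟨?_, fun ⟨hB, hrank⟩ => ?_⟩
  · rintro ⟨Ψ, rfl⟩
    exact ⟨posSemidef_conjTranspose_mul_self Ψ,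
      (rank_conjTranspose_mul_self Ψ).trans_le Ψ.rank_le_card_height⟩
  obtain ⟨U, hU, d, rfl⟩ := exists_unitaryDiag hB.1
  have hd := nonneg_of_posSemidef_unitaryDiag hU hB
  rw [rank_unitaryDiag hU, ← Fintype.card_subtype] at hrank
  obtain ⟨e⟩ := Function.Embedding.nonempty_of_card_le hrank
  -- `E` is the square root of `diagonal d` without its zero rows, so that it fits into `κ` rows.
  let E : Matrix κ n ℂ :=
    of fun k i => if h : d i ≠ 0 then if e ⟨i, h⟩ = k then (√(d i) : ℂ) else 0 else 0
  have hE : Eᴴ * E = diagonal fun i => (d i : ℂ) := by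
    ext i j
    by_cases hi : d i = 0
    · simp [E, mul_apply, diagonal_apply, hi]
    obtain rfl | hij := eq_or_ne i j
    · simp [E, mul_apply, hi, ← Complex.ofReal_mul, Real.mul_self_sqrt (hd i)]
    · simp [E, mul_apply, hi, hij]
  refine ⟨E * Uᴴ, ?_⟩
  rw [conjTranspose_mul, conjTranspose_conjTranspose, Matrix.mul_assoc, ← Matrix.mul_assoc Eᴴ, hE,
    ← Matrix.mul_assoc, unitaryDiag]

variable {N M : ℕ} {B X Y : Matrix (Fin N) (Fin N) ℂ}

/-- `X` is a rank-`M` truncation `S_M = U D_M Uᴴ` of `S = U D Uᴴ`, for some unitary diagonalization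
of `S` with nonnegative eigenvalues in nonincreasing order. It is a relation, since `X` depends on
the choice of eigenvectors when the `M`-th largest eigenvalue is repeated. -/
def IsRankTruncation (M : ℕ) (S X : Matrix (Fin N) (Fin N) ℂ) : Prop :=
  ∃ U ∈ unitaryGroup (Fin N) ℂ, ∃ d : Fin N → ℝ, 0 ≤ d ∧ Antitone d ∧
    S = unitaryDiag U d ∧ X = unitaryDiag U (truncate M d)

lemma exists_isRankTruncation_and_iff {S : Matrix (Fin N) (Fin N) ℂ}
    {p : Matrix (Fin N) (Fin N) ℂ → Prop} :
    (∃ X, IsRankTruncation M S X ∧ p X) ↔ ∃ (U : Matrix (Fin N) (Fin N) ℂ) (d : Fin N → ℝ),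
      Uᴴ * U = 1 ∧ U * Uᴴ = 1 ∧ (∀ i, 0 ≤ d i) ∧ Antitone d ∧
      S = U * diagonal (fun i => (d i : ℂ)) * Uᴴ ∧
      p (U * diagonal (fun i : Fin N => if (i : ℕ) < M then (d i : ℂ) else 0) * Uᴴ) := by
  have unitaryDiag_truncate (U : Matrix (Fin N) (Fin N) ℂ) (d : Fin N → ℝ) :
      unitaryDiag U (truncate M d) =
        U * diagonal (fun i : Fin N => if (i : ℕ) < M then (d i : ℂ) else 0) * Uᴴ := by
    simp only [unitaryDiag, truncate, apply_ite Complex.ofReal, Complex.ofReal_zero]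
  simp only [← unitaryDiag_truncate]
  constructor
  · rintro ⟨_, ⟨U, hU, d, hd0, hd, hS, rfl⟩, hp⟩
    exact ⟨U, d, hU.1, hU.2, hd0, hd, hS, hp⟩
  · rintro ⟨U, d, hU, hU', hd0, hd, hS, hp⟩
    exact ⟨_, ⟨U, ⟨hU, hU'⟩, d, hd0, hd, hS, rfl⟩, hp⟩

lemma IsRankTruncation.posSemidef (h : IsRankTruncation M B X) : X.PosSemidef := by
  obtain ⟨U, -, d, hd, -, -, rfl⟩ := h
  exact posSemidef_unitaryDiag U (truncate_nonneg M hd)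

lemma IsRankTruncation.rank_le (h : IsRankTruncation M B X) : X.rank ≤ M := by
  obtain ⟨U, hU, d, -, -, -, rfl⟩ := h
  rw [rank_unitaryDiag hU]
  exact card_truncate_ne_zero_le M d

lemma IsRankTruncation.smul {c : ℝ} (hc : 0 ≤ c) (h : IsRankTruncation M B X) :
    IsRankTruncation M ((c : ℂ) • B) ((c : ℂ) • X) := by
  obtain ⟨U, hU, d, hd, hd_anti, rfl, rfl⟩ := h
  refine ⟨U, hU, c • d, smul_nonneg hc hd, fun i j hij => ?_, smul_unitaryDiag c U d, ?_⟩
  · exact mul_le_mul_of_nonneg_left (hd_anti hij) hc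
  · rw [smul_unitaryDiag, smul_truncate]

lemma isRankTruncation_smul_iff {c : ℝ} (hc : 0 < c) :
    IsRankTruncation M ((c : ℂ) • B) X ↔ ∃ Y, IsRankTruncation M B Y ∧ X = (c : ℂ) • Y := by
  have hc' : (c : ℂ) ≠ 0 := Complex.ofReal_ne_zero.mpr hc.ne'
  refine ⟨fun h => ⟨(c : ℂ)⁻¹ • X, ?_, (smul_inv_smul₀ hc' X).symm⟩, ?_⟩
  · simpa only [Complex.ofReal_inv, inv_smul_smul₀ hc'] using h.smul (inv_nonneg.mpr hc.le)
  · rintro ⟨Y, hY, rfl⟩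
    exact hY.smul hc.le

lemma isRankTruncation_of_perm {U : Matrix (Fin N) (Fin N) ℂ}
    (hU : U ∈ unitaryGroup (Fin N) ℂ) {d x : Fin N → ℝ} (hd : 0 ≤ d) (σ : Equiv.Perm (Fin N))
    (hσ : Antitone (d ∘ σ)) (hx : x ∘ σ = truncate M (d ∘ σ)) :
    IsRankTruncation M (unitaryDiag U d) (unitaryDiag U x) :=
  ⟨U.submatrix id σ, submatrix_equiv_mem_unitaryGroup hU σ, d ∘ σ, fun i => hd (σ i), hσ,
    (unitaryDiag_submatrix_equiv U d σ).symm, by rw [← hx, unitaryDiag_submatrix_equiv]⟩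

lemma exists_isRankTruncation (M : ℕ) (hB : B.PosSemidef) : ∃ X, IsRankTruncation M B X := by
  obtain ⟨U, hU, d, rfl⟩ := exists_unitaryDiag hB.1
  let σ := Tuple.sort (OrderDual.toDual ∘ d)
  have hσ : Antitone (d ∘ σ) := fun _ _ hij => Tuple.monotone_sort (OrderDual.toDual ∘ d) hij
  exact ⟨_, isRankTruncation_of_perm (x := truncate M (d ∘ σ) ∘ σ.symm) hU
    (nonneg_of_posSemidef_unitaryDiag hU hB) σ hσ (by simp [Function.comp_assoc])⟩

lemma frobSq_truncate_sub_add_le {U V : Matrix (Fin N) (Fin N) ℂ}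
    (hU : U ∈ unitaryGroup (Fin N) ℂ) (hV : V ∈ unitaryGroup (Fin N) ℂ) {d x : Fin N → ℝ}
    (hd0 : 0 ≤ d) (hd : Antitone d) (hx : (unitaryDiag V x).rank ≤ M) :
    frobSq (unitaryDiag U (truncate M d) - unitaryDiag U d) +
        ∑ i with x i ≠ 0, ∑ j, (x i - d j) ^ 2 * ‖(Vᴴ * U) i j‖ ^ 2 ≤
      frobSq (unitaryDiag V x - unitaryDiag U d) := by
  rw [frobSq_unitaryDiag_sub_same hU, sum_sq_truncate_sub, frobSq_unitaryDiag_sub_unitaryDiag hU hV]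
  rw [rank_unitaryDiag hV] at hx
  exact sum_tail_add_sum_support_le (norm_sq_mem_doublyStochastic
    (mul_mem (Unitary.star_mem hV) hU)) hx hd0 hd

lemma IsRankTruncation.frobSq_sub_le (h : IsRankTruncation M B X) (hY : Y.IsHermitian)
    (hY_rank : Y.rank ≤ M) : frobSq (X - B) ≤ frobSq (Y - B) := by
  obtain ⟨U, hU, d, hd0, hd, rfl, rfl⟩ := h
  obtain ⟨V, hV, y, rfl⟩ := exists_unitaryDiag hY
  exact (le_add_of_nonneg_right (by positivity)).trans
    (frobSq_truncate_sub_add_le hU hV hd0 hd hY_rank)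

lemma IsRankTruncation.mul_self_eq_mul_of_frobSq_sub_le (h : IsRankTruncation M B X)
    (hY : Y.IsHermitian) (hY_rank : Y.rank ≤ M) (hYX : frobSq (Y - B) ≤ frobSq (X - B)) :
    Y * Y = Y * B := by
  obtain ⟨U, hU, d, hd0, hd, rfl, rfl⟩ := h
  obtain ⟨V, hV, y, rfl⟩ := exists_unitaryDiag hY
  have sum_eq_zero : ∑ i with y i ≠ 0, ∑ j, (y i - d j) ^ 2 * ‖(Vᴴ * U) i j‖ ^ 2 = 0 :=
    le_antisymm (by linarith [frobSq_truncate_sub_add_le hU hV hd0 hd hY_rank]) (by positivity)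
  refine unitaryDiag_mul_self_eq_mul hV hU fun i j hi hij => ?_
  have row_zero := (Finset.sum_eq_zero_iff_of_nonneg fun i _ => by positivity).mp sum_eq_zero i
    (Finset.mem_filter.mpr ⟨Finset.mem_univ i, hi⟩)
  have entry_zero := (Finset.sum_eq_zero_iff_of_nonneg fun j _ => by positivity).mp row_zero j
    (Finset.mem_univ j)
  have norm_sq_zero :=
    (mul_eq_zero.mp entry_zero).resolve_left (pow_ne_zero 2 (sub_ne_zero.mpr hij))
  exact norm_eq_zero.mp (pow_eq_zero_iff two_ne_zero |>.mp norm_sq_zero)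

theorem isRankTruncation_iff_forall_frobSq_sub_le (hB : B.PosSemidef) (hX : X.IsHermitian)
    (hX_rank : X.rank ≤ M) :
    IsRankTruncation M B X ↔
      ∀ Y : Matrix (Fin N) (Fin N) ℂ, Y.PosSemidef → Y.rank ≤ M →
        frobSq (X - B) ≤ frobSq (Y - B) := by
  refine ⟨fun h Y hY hY_rank => h.frobSq_sub_le hY.1 hY_rank, fun h => ?_⟩
  obtain ⟨Z, hZ⟩ := exists_isRankTruncation M hB
  have X_mul_X : X * X = X * B :=
    hZ.mul_self_eq_mul_of_frobSq_sub_le hX hX_rank (h Z hZ.posSemidef hZ.rank_le)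
  obtain ⟨U, hU, x, d, rfl, rfl⟩ := exists_unitaryDiag_of_mul_self_eq_mul hX hB X_mul_X
  have hd := nonneg_of_posSemidef_unitaryDiag hU hB
  rw [rank_unitaryDiag hU] at hX_rank
  obtain ⟨σ, hσ, x_eq⟩ := exists_perm_eq_truncate_of_forall_sum_sq_sub_le hd hX_rank
    fun y hy hy_card => by
      simpa only [frobSq_unitaryDiag_sub_same hU] using
        h (unitaryDiag U y) (posSemidef_unitaryDiag U hy) (by rwa [rank_unitaryDiag hU])
  exact isRankTruncation_of_perm hU hd σ hσ x_eq

theorem stmt0_general {p : Type*} [Fintype p] {C : ℝ} (hC : C ≠ 0) {A : Matrix (Fin N) p ℂ}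
    (hA : A * Aᴴ = (C : ℂ) • 1) {T : Matrix p p ℂ} (hS : (A * T * Aᴴ).PosSemidef)
    (Φ : Matrix (Fin M) (Fin N) ℂ) :
    (∀ Ψ : Matrix (Fin M) (Fin N) ℂ,
        frobSq (Aᴴ * Φᴴ * Φ * A - T) ≤ frobSq (Aᴴ * Ψᴴ * Ψ * A - T)) ↔
      ∃ X, IsRankTruncation M (A * T * Aᴴ) X ∧ Φᴴ * Φ = ((C : ℂ) ^ 2)⁻¹ • X := by
  have C_inv_pos : 0 < (C ^ 2)⁻¹ := by positivity
  have C_inv_cast : ((C : ℂ) ^ 2)⁻¹ = ((C ^ 2)⁻¹ : ℝ) := by push_cast; rfl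
  have exists_gram_iff (Y : Matrix (Fin N) (Fin N) ℂ) :
      (∃ Ψ : Matrix (Fin M) (Fin N) ℂ, Ψᴴ * Ψ = Y) ↔ Y.PosSemidef ∧ Y.rank ≤ M := by
    simpa only [Fintype.card_fin] using exists_conjTranspose_mul_self_eq_iff (κ := Fin M)
  obtain ⟨gram_Φ, rank_Φ⟩ := (exists_gram_iff _).mp ⟨Φ, rfl⟩
  have hB : ((((C ^ 2)⁻¹ : ℝ) : ℂ) • (A * T * Aᴴ)).PosSemidef :=
    hS.smul (by exact_mod_cast C_inv_pos.le)
  simp only [fun Ψ : Matrix (Fin M) (Fin N) ℂ => Matrix.mul_assoc Aᴴ Ψᴴ Ψ,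
    frobSq_conjTranspose_mul_mul_sub_le_iff hC hA, C_inv_cast]
  rw [← isRankTruncation_smul_iff C_inv_pos,
    isRankTruncation_iff_forall_frobSq_sub_le hB gram_Φ.1 rank_Φ]
  simp only [← and_imp, ← exists_gram_iff, forall_exists_index, forall_apply_eq_imp_iff]

end RankTruncation

/-- Theorem 1 of the paper: `Φ` minimizes `‖Aᴴ Φᴴ Φ A − T‖_F²` iff
`Φᴴ Φ = C⁻² S_M` for a rank-`M` truncation `S_M` of `S = A T Aᴴ`. -/
theorem stmt0 (N P M : ℕ) (hN : 0 < N) (hM : 0 < M) (hNP : N ≤ P) (hMN : M ≤ N)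
    (C : ℝ) (hC : 0 < C)
    (A : Matrix (Fin N) (Fin P) ℂ) (hA : A * Aᴴ = (C : ℂ) • 1)
    (T : Matrix (Fin P) (Fin P) ℂ) (hT : T.PosSemidef)
    (S : Matrix (Fin N) (Fin N) ℂ) (hS : S = A * T * Aᴴ)
    (Φ : Matrix (Fin M) (Fin N) ℂ) :
    (∀ Ψ : Matrix (Fin M) (Fin N) ℂ,
        frobSq (Aᴴ * Φᴴ * Φ * A - T) ≤ frobSq (Aᴴ * Ψᴴ * Ψ * A - T)) ↔
    ∃ (U : Matrix (Fin N) (Fin N) ℂ) (d : Fin N → ℝ),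
      Uᴴ * U = 1 ∧ U * Uᴴ = 1 ∧ (∀ i, 0 ≤ d i) ∧ Antitone d ∧
      S = U * Matrix.diagonal (fun (i : Fin N) => (d i : ℂ)) * Uᴴ ∧
      Φᴴ * Φ = ((C : ℂ) ^ 2)⁻¹ •
        (U * Matrix.diagonal (fun (i : Fin N) => if (i : ℕ) < M then (d i : ℂ) else 0) * Uᴴ) := by
  subst hS
  exact (stmt0_general hC.ne' hA (hT.mul_mul_conjTranspose_same A) Φ).trans
    (exists_isRankTruncation_and_iff (p := fun X => Φᴴ * Φ = ((C : ℂ) ^ 2)⁻¹ • X))
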